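/- arXiv:2110.05051 — 2 statements merged into one kernel-verified Lean document; each statement's English description precedes it below -/
import Mathlib

section
/- Let ν ≥ 0, α > -1, c > 0 and k ∈ ℕ. Then ∫_0^∞ x^{k+α} e^{-cx} J_ν(x) dx = Γ(k+α+ν+1) / ( (c²+1)^{(k+α+1)/2} · Γ(ν+1) ) · ( (√(c²+1)+c)/(√(c²+1)−c) )^{−ν/2} · ₂F₁( −k−α, k+α+1; 1+ν; (√(c²+1)−c)/(2√(c²+1)) ), where the hypergeometric argument lies in (0, 1/2) so the defining series converges absolutely. -/
open MeasureTheory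

/-- Bessel function of the first kind of order `ν`, defined via its power series. -/
noncomputable def besselJ (ν x : ℝ) : ℝ :=
  ∑' m : ℕ, (-1 : ℝ) ^ m / (m.factorial * Real.Gamma ((m : ℝ) + ν + 1)) *
    (x / 2) ^ (2 * (m : ℝ) + ν)

/-- Ascending factorial (Pochhammer symbol) `(a)_n = a (a+1) ⋯ (a+n-1)`. -/
noncomputable def ascFactorial (a : ℝ) (n : ℕ) : ℝ :=
  ∏ i ∈ Finset.range n, (a + i)

/-- Gauss hypergeometric function `₂F₁(a, b; γ; z)` defined by its power series. -/
noncomputable def hyper2F1 (a b γ z : ℝ) : ℝ :=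
  ∑' n : ℕ, ascFactorial a n * ascFactorial b n / (ascFactorial γ n * n.factorial) * z ^ n

theorem ascFactorial_zero (a : ℝ) : ascFactorial a 0 = 1 := by
  simp [ascFactorial]

theorem ascFactorial_succ (a : ℝ) (n : ℕ) :
    ascFactorial a (n + 1) = ascFactorial a n * (a + n) :=
  Finset.prod_range_succ _ _

theorem ascFactorial_succ_left (a : ℝ) (n : ℕ) :
    ascFactorial a (n + 1) = a * ascFactorial (a + 1) n := by
  simp only [ascFactorial, Finset.prod_range_succ', Nat.cast_zero, add_zero, Nat.cast_add,
    Nat.cast_one]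
  rw [mul_comm]
  congr 1
  exact Finset.prod_congr rfl fun i _ => by ring

theorem ascFactorial_add (a : ℝ) (n j : ℕ) :
    ascFactorial a (n + j) = ascFactorial a n * ascFactorial (a + n) j := by
  simp only [ascFactorial, Finset.prod_range_add, Nat.cast_add, add_assoc]

theorem ascFactorial_pos {a : ℝ} (ha : 0 < a) (n : ℕ) : 0 < ascFactorial a n :=
  Finset.prod_pos fun i _ => by positivity

theorem ascFactorial_one (n : ℕ) : ascFactorial 1 n = n.factorial := by
  induction n with
  | zero => simp [ascFactorial_zero]
  | succ n ih =>
    rw [ascFactorial_succ, ih, Nat.factorial_succ]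
    push_cast
    ring

theorem ascFactorial_le {a b : ℝ} (ha : 0 ≤ a) (hab : a ≤ b) (n : ℕ) :
    ascFactorial a n ≤ ascFactorial b n :=
  Finset.prod_le_prod (fun i _ => by positivity) fun i _ => by gcongr

theorem abs_ascFactorial_le (a : ℝ) (n : ℕ) : |ascFactorial a n| ≤ ascFactorial |a| n := by
  rw [ascFactorial, Finset.abs_prod]
  refine Finset.prod_le_prod (fun i _ => abs_nonneg _) fun i _ => ?_
  simpa using abs_add_le a i

/-- Reflection of the ascending factorial. -/
theorem ascFactorial_neg_sub (a : ℝ) (n : ℕ) :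
    ascFactorial (-a - n) n = (-1) ^ n * ascFactorial (a + 1) n := by
  have h : (-1 : ℝ) ^ n = ∏ _i ∈ Finset.range n, (-1 : ℝ) := by simp
  rw [ascFactorial, ← Finset.prod_range_reflect, ascFactorial, h, ← Finset.prod_mul_distrib]
  refine Finset.prod_congr rfl fun i hi => ?_
  have hi' : i + 1 ≤ n := Finset.mem_range.1 hi
  rw [Nat.sub_sub, Nat.cast_sub (by omega)]
  push_cast
  ring

theorem factorial_add_le (m n : ℕ) :
    ((m + n).factorial : ℝ) ≤ 2 ^ (m + n) * (m.factorial * n.factorial) := by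
  have hc : (m + n).choose n ≤ 2 ^ (m + n) := Nat.choose_le_two_pow _ _
  rw [← Nat.add_choose_mul_factorial_mul_factorial m n, mul_assoc]
  push_cast
  gcongr
  exact_mod_cast hc

/-- Up to a constant, ascending factorials grow at most like `2 ^ n * n !`. -/
theorem exists_ascFactorial_le (a : ℝ) :
    ∃ C : ℝ, 0 < C ∧ ∀ n : ℕ, |ascFactorial a n| ≤ C * (2 ^ n * n.factorial) := by
  obtain ⟨A, hA⟩ := exists_nat_ge |a|
  refine ⟨2 ^ A, by positivity, fun n => ?_⟩
  have h1 : |ascFactorial a n| ≤ ascFactorial (1 + A) n :=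
    (abs_ascFactorial_le a n).trans (ascFactorial_le (abs_nonneg a) (by linarith) n)
  have h2 : ascFactorial 1 A * ascFactorial (1 + A) n = (A + n).factorial := by
    rw [← ascFactorial_add, ascFactorial_one]
  rw [ascFactorial_one] at h2
  have hA0 : (0 : ℝ) < A.factorial := by positivity
  refine h1.trans (le_of_mul_le_mul_left ?_ hA0)
  rw [h2]
  refine (factorial_add_le A n).trans (le_of_eq ?_)
  ring

theorem ascPochhammer_eval_eq_ascFactorial (a : ℝ) (n : ℕ) :
    (ascPochhammer ℝ n).eval a = ascFactorial a n := by
  induction n with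
  | zero => simp [ascFactorial_zero]
  | succ n ih => simp [ascPochhammer_succ_right, ih, ascFactorial_succ]

theorem Gamma_add_nat {s : ℝ} (hs : 0 < s) (n : ℕ) :
    Real.Gamma (s + n) = ascFactorial s n * Real.Gamma s := by
  induction n with
  | zero => simp [ascFactorial_zero]
  | succ n ih =>
    have h : s + ((n + 1 : ℕ) : ℝ) = (s + n) + 1 := by push_cast; ring
    rw [h, Real.Gamma_add_one (by positivity), ih, ascFactorial_succ]
    ring

/-- The Chu–Vandermonde identity. -/
theorem sum_choose_mul_ascFactorial_div (b c : ℝ) (hc : 0 < c) (n : ℕ) :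
    ∑ m ∈ Finset.range (n + 1), (-1) ^ m * (n.choose m : ℝ) * (ascFactorial b m / ascFactorial c m)
      = ascFactorial (c - b) n / ascFactorial c n := by
  induction n generalizing b c with
  | zero => simp [ascFactorial_zero]
  | succ n ih =>
    have h1 := ih b c hc
    have h2 := ih (b + 1) (c + 1) (by linarith)
    have hcn := (ascFactorial_pos hc n).ne'
    have hcn' := (ascFactorial_pos (show 0 < c + 1 by linarith) n).ne'
    have hcc : c * ascFactorial (c + 1) n = ascFactorial c n * (c + n) := by
      rw [← ascFactorial_succ_left, ascFactorial_succ]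
    have key : ∑ m ∈ Finset.range (n + 1 + 1),
        (-1) ^ m * ((n + 1).choose m : ℝ) * (ascFactorial b m / ascFactorial c m) =
        ∑ m ∈ Finset.range (n + 1),
          (-1) ^ m * (n.choose m : ℝ) * (ascFactorial b m / ascFactorial c m) -
        b / c * ∑ m ∈ Finset.range (n + 1),
          (-1) ^ m * (n.choose m : ℝ) * (ascFactorial (b + 1) m / ascFactorial (c + 1) m) := by
      rw [Finset.sum_range_succ' _ (n + 1), Finset.mul_sum]
      simp only [Nat.choose_succ_succ', Nat.cast_add, mul_add, add_mul, Finset.sum_add_distrib]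
      have e1 : ∑ m ∈ Finset.range (n + 1), (-1) ^ (m + 1) * (n.choose m : ℝ) *
          (ascFactorial b (m + 1) / ascFactorial c (m + 1)) =
          - ∑ m ∈ Finset.range (n + 1), b / c * ((-1) ^ m * (n.choose m : ℝ) *
            (ascFactorial (b + 1) m / ascFactorial (c + 1) m)) := by
        rw [← Finset.sum_neg_distrib]
        refine Finset.sum_congr rfl fun m _ => ?_
        rw [ascFactorial_succ_left, ascFactorial_succ_left, mul_div_mul_comm]
        ring
      have e2 : ∑ m ∈ Finset.range (n + 1),
          (-1) ^ m * (n.choose m : ℝ) * (ascFactorial b m / ascFactorial c m) =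
          ∑ m ∈ Finset.range (n + 1), (-1) ^ (m + 1) * (n.choose (m + 1) : ℝ) *
          (ascFactorial b (m + 1) / ascFactorial c (m + 1)) + 1 := by
        rw [Finset.sum_range_succ' _ n, Finset.sum_range_succ _ n]
        simp [ascFactorial_zero]
      rw [e1, e2]
      simp [ascFactorial_zero]
      ring
    rw [key, h1, h2, show c + 1 - (b + 1) = c - b by ring, ascFactorial_succ, ascFactorial_succ]
    have hcn0 : c + n ≠ 0 := by positivity
    have e : b / c * (ascFactorial (c - b) n / ascFactorial (c + 1) n) =
        b * ascFactorial (c - b) n / (ascFactorial c n * (c + n)) := by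
      rw [← hcc, div_mul_div_comm]
    rw [e]
    field_simp
    ring

/-- A summable double series may be summed along antidiagonals. -/
theorem tsum_prod_eq_tsum_sum_range {f : ℕ × ℕ → ℝ} (hf : Summable f) :
    ∑' p, f p = ∑' n, ∑ k ∈ Finset.range (n + 1), f (k, n - k) := by
  rw [← (Finset.HasAntidiagonal.sigmaAntidiagonalEquivProd (A := ℕ)).tsum_eq f]
  have hs : Summable (f ∘ Finset.HasAntidiagonal.sigmaAntidiagonalEquivProd (A := ℕ)) :=
    (Equiv.summable_iff _).2 hf
  refine (Summable.tsum_sigma' (fun n => (hasSum_fintype _).summable) hs).trans ?_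
  refine tsum_congr fun n => ?_
  rw [tsum_fintype, ← Finset.Nat.sum_antidiagonal_eq_sum_range_succ_mk]
  exact Finset.sum_coe_sort _ f

/-- The binomial series with exponent `-b`. -/
theorem hasSum_one_sub_rpow_neg (b : ℝ) {z : ℝ} (hz : |z| < 1) :
    HasSum (fun j : ℕ => ascFactorial b j / j.factorial * z ^ j) ((1 - z) ^ (-b)) := by
  have h := (Real.one_div_one_sub_rpow_hasFPowerSeriesOnBall_zero b).hasSum
    (y := z) (by simpa [enorm_eq_nnnorm, ← NNReal.coe_lt_coe] using hz)
  have hz1 : 0 < 1 - z := by linarith [(abs_lt.1 hz).2]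
  rw [zero_add, one_div, ← Real.rpow_neg hz1.le] at h
  refine h.congr_fun fun j => ?_
  have hj : (j.factorial : ℝ) ≠ 0 := by positivity
  have e : (j.factorial : ℝ) * Ring.choose (b + j - 1) j = ascFactorial b j := by
    rw [← nsmul_eq_mul, ← Ring.descPochhammer_eq_factorial_smul_choose,
      Polynomial.descPochhammer_smeval_eq_ascPochhammer, Polynomial.ascPochhammer_smeval_eq_eval,
      ascPochhammer_eval_eq_ascFactorial]
    congr 1
    ring
  rw [FormalMultilinearSeries.ofScalars_apply_eq, ← e, smul_eq_mul, mul_div_cancel_left₀ _ hj]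

theorem factorial_le_ascFactorial {c : ℝ} (hc : 1 ≤ c) (n : ℕ) :
    (n.factorial : ℝ) ≤ ascFactorial c n :=
  ascFactorial_one n ▸ ascFactorial_le zero_le_one hc n

theorem summable_geometric_mul_geometric {x y : ℝ} (hx : 0 ≤ x) (hx1 : x < 1) (hy : 0 ≤ y)
    (hy1 : y < 1) : Summable fun p : ℕ × ℕ => x ^ p.1 * y ^ p.2 :=
  (summable_geometric_of_lt_one hx hx1).mul_of_nonneg (summable_geometric_of_lt_one hy hy1)
    (fun _ => by positivity) fun _ => by positivity

/-- The Pfaff transformation of the hypergeometric series, for small arguments. -/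
theorem hyper2F1_pfaff (a b : ℝ) {c z : ℝ} (hc : 1 ≤ c) (hz : 0 ≤ z) (hz8 : z < 1 / 8) :
    (1 - z) ^ (-b) * hyper2F1 b (c - a) c (-(z / (1 - z))) = hyper2F1 a b c z := by
  have hc0 : 0 < c := by linarith
  have hz1 : 0 < 1 - z := by linarith
  let f : ℕ × ℕ → ℝ := fun p => (-1) ^ p.1 * (ascFactorial b (p.1 + p.2) * ascFactorial (c - a) p.1 /
    (ascFactorial c p.1 * p.1.factorial * p.2.factorial)) * z ^ (p.1 + p.2)
  have hf : Summable f := by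
    obtain ⟨B, hB, hBle⟩ := exists_ascFactorial_le b
    obtain ⟨D, hD, hDle⟩ := exists_ascFactorial_le (c - a)
    refine Summable.of_norm_bounded ((summable_geometric_mul_geometric (x := 8 * z) (y := 4 * z)
      (by linarith) (by linarith) (by linarith) (by linarith)).mul_left (B * D)) ?_
    rintro ⟨n, j⟩
    have hcn := ascFactorial_pos hc0 n
    simp only [f, norm_mul, norm_div, norm_pow, norm_neg, norm_one, one_pow, one_mul,
      Real.norm_eq_abs, abs_of_pos hcn, abs_of_nonneg hz, Nat.abs_cast]
    have h1 : |ascFactorial b (n + j)| ≤ B * (4 ^ (n + j) * (n.factorial * j.factorial)) := by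
      refine (hBle _).trans (mul_le_mul_of_nonneg_left ?_ hB.le)
      refine (mul_le_mul_of_nonneg_left (factorial_add_le n j) (by positivity)).trans_eq ?_
      rw [show (4 : ℝ) = 2 * 2 by norm_num, mul_pow]
      ring
    have h2 : |ascFactorial (c - a) n| ≤ D * (2 ^ n * ascFactorial c n) := by
      refine (hDle n).trans ?_
      gcongr
      exact factorial_le_ascFactorial hc n
    have h3 : |ascFactorial b (n + j)| * |ascFactorial (c - a) n| /
        (ascFactorial c n * n.factorial * j.factorial) ≤ B * D * (8 ^ n * 4 ^ j) := by
      rw [div_le_iff₀ (by positivity)]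
      refine (mul_le_mul h1 h2 (abs_nonneg _) (by positivity)).trans_eq ?_
      rw [show (8 : ℝ) = 4 * 2 by norm_num, mul_pow]
      ring
    refine (mul_le_mul_of_nonneg_right h3 (by positivity)).trans_eq ?_
    ring
  have hL : (1 - z) ^ (-b) * hyper2F1 b (c - a) c (-(z / (1 - z))) = ∑' p, f p := by
    rw [hf.tsum_prod, hyper2F1, ← tsum_mul_left]
    refine tsum_congr fun n => ?_
    have hs := (hasSum_one_sub_rpow_neg (b + n) (z := z)
      (by rw [abs_of_nonneg hz]; linarith)).tsum_eq
    have e : ∀ j : ℕ, f (n, j) = (-1) ^ n * z ^ n * (ascFactorial b n * ascFactorial (c - a) n /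
        (ascFactorial c n * n.factorial)) *
        (ascFactorial (b + n) j / j.factorial * z ^ j) := fun j => by
      simp only [f, ascFactorial_add, pow_add]
      ring
    simp_rw [e]
    rw [tsum_mul_left, hs, neg_add, Real.rpow_add hz1, Real.rpow_neg hz1.le (n : ℝ),
      Real.rpow_natCast, neg_pow, div_pow]
    ring
  rw [hL, tsum_prod_eq_tsum_sum_range hf, hyper2F1]
  refine tsum_congr fun N => ?_
  have hcv := sum_choose_mul_ascFactorial_div (c - a) c hc0 N
  rw [sub_sub_cancel] at hcv
  have hN : (N.factorial : ℝ) ≠ 0 := by positivity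
  have e : ∀ n ∈ Finset.range (N + 1), f (n, N - n) = ascFactorial b N * z ^ N / N.factorial *
      ((-1) ^ n * (N.choose n : ℝ) * (ascFactorial (c - a) n / ascFactorial c n)) := by
    intro n hn
    have hn' : n ≤ N := Nat.lt_succ_iff.1 (Finset.mem_range.1 hn)
    simp only [f, Nat.add_sub_cancel' hn', Nat.cast_choose ℝ hn']
    field_simp
  rw [Finset.sum_congr rfl e, ← Finset.mul_sum, hcv]
  ring

/-- The entire function `s ↦ s ^ (-ν / 2) * J_ν(2 √s)`. -/
noncomputable def besselEntire (ν s : ℝ) : ℝ :=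
  ∑' m : ℕ, (-s) ^ m / (m.factorial * Real.Gamma ((m : ℝ) + ν + 1))

theorem besselJ_eq_rpow_mul_besselEntire (ν : ℝ) {x : ℝ} (hx : 0 < x) :
    besselJ ν x = (x / 2) ^ ν * besselEntire ν (x ^ 2 / 4) := by
  rw [besselJ, besselEntire, ← tsum_mul_left]
  refine tsum_congr fun m => ?_
  have h : (x / 2) ^ (2 * (m : ℝ) + ν) = (x / 2) ^ ν * (x ^ 2 / 4) ^ m := by
    rw [Real.rpow_add (by positivity), Real.rpow_mul (by positivity), Real.rpow_natCast,
      Real.rpow_two, div_pow]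
    norm_num
    ring
  rw [h, neg_pow (x ^ 2 / 4)]
  ring

theorem factorial_mul_Gamma_le {ν : ℝ} (hν : 0 ≤ ν) (m : ℕ) :
    m.factorial * Real.Gamma (ν + 1) ≤ Real.Gamma ((m : ℝ) + ν + 1) := by
  rw [add_assoc, add_comm (m : ℝ), Gamma_add_nat (by positivity)]
  have := Real.Gamma_pos_of_pos (show 0 < ν + 1 by positivity)
  gcongr
  exact factorial_le_ascFactorial (by linarith) m

theorem Gamma_le_Gamma_add_nat {ν : ℝ} (hν : 0 ≤ ν) (m : ℕ) :
    Real.Gamma (ν + 1) ≤ Real.Gamma ((m : ℝ) + ν + 1) := by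
  refine le_trans ?_ (factorial_mul_Gamma_le hν m)
  have := Real.Gamma_pos_of_pos (show 0 < ν + 1 by positivity)
  exact le_mul_of_one_le_left this.le (by exact_mod_cast Nat.one_le_of_lt m.factorial_pos)

theorem norm_besselEntire_term_le {ν : ℝ} (hν : 0 ≤ ν) (s : ℝ) (m : ℕ) :
    ‖(-s) ^ m / (m.factorial * Real.Gamma ((m : ℝ) + ν + 1))‖ ≤
      (Real.Gamma (ν + 1))⁻¹ * (|s| ^ m / m.factorial) := by
  have hΓ := Real.Gamma_pos_of_pos (show 0 < ν + 1 by positivity)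
  have hΓ' := Real.Gamma_pos_of_pos (show 0 < (m : ℝ) + ν + 1 by positivity)
  rw [norm_div, norm_pow, norm_neg, Real.norm_eq_abs, Real.norm_of_nonneg (by positivity),
    mul_comm (m.factorial : ℝ), ← div_div, div_eq_inv_mul _ (Real.Gamma _), mul_div_assoc]
  gcongr
  exact Gamma_le_Gamma_add_nat hν m

theorem summable_norm_besselEntire {ν : ℝ} (hν : 0 ≤ ν) (s : ℝ) :
    Summable fun m : ℕ => ‖(-s) ^ m / (m.factorial * Real.Gamma ((m : ℝ) + ν + 1))‖ :=
  .of_nonneg_of_le (fun _ => norm_nonneg _) (norm_besselEntire_term_le hν s)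
    ((Real.summable_pow_div_factorial |s|).mul_left _)

theorem hasSum_besselEntire {ν : ℝ} (hν : 0 ≤ ν) (s : ℝ) :
    HasSum (fun m : ℕ => (-s) ^ m / (m.factorial * Real.Gamma ((m : ℝ) + ν + 1)))
      (besselEntire ν s) :=
  (summable_norm_besselEntire hν s).of_norm.hasSum

theorem hasDerivAt_besselEntire {ν : ℝ} (hν : 0 ≤ ν) (s : ℝ) :
    HasDerivAt (besselEntire ν) (-besselEntire (ν + 1) s) s := by
  let g' : ℕ → ℝ → ℝ := fun m y =>
    (m * (-y) ^ (m - 1) * -1) / (m.factorial * Real.Gamma ((m : ℝ) + ν + 1))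
  have hsucc : ∀ m y, g' (m + 1) y =
      -((-y) ^ m / (m.factorial * Real.Gamma ((m : ℝ) + (ν + 1) + 1))) := by
    intro m y
    have : ((m + 1 : ℕ) : ℝ) + ν + 1 = m + (ν + 1) + 1 := by push_cast; ring
    simp only [g', this, Nat.factorial_succ, Nat.add_sub_cancel]
    have h1 : (m.factorial : ℝ) ≠ 0 := by positivity
    have h2 := (Real.Gamma_pos_of_pos (show 0 < (m : ℝ) + (ν + 1) + 1 by positivity)).ne'
    push_cast
    field_simp
  have hzero : ∀ y, g' 0 y = 0 := fun y => by simp [g']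
  let R := |s| + 1
  let u : ℕ → ℝ := fun m => Nat.casesOn m 0
    fun k => (Real.Gamma (ν + 1 + 1))⁻¹ * (R ^ k / k.factorial)
  have hu : Summable u :=
    (summable_nat_add_iff 1).1 ((Real.summable_pow_div_factorial R).mul_left _)
  have h := hasDerivAt_tsum_of_isPreconnected (g' := g') (t := Metric.ball 0 R) (y := s) (y₀ := s)
    (g := fun (m : ℕ) y => (-y) ^ m / (m.factorial * Real.Gamma ((m : ℝ) + ν + 1)))
    hu Metric.isOpen_ball (convex_ball 0 R).isPreconnected
    (fun m y _ => (((hasDerivAt_id y).neg.pow m).div_const _)) ?_ (by simp [R])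
    (hasSum_besselEntire hν s).summable (by simp [R])
  · refine h.congr_deriv ?_
    have hs : Summable fun m => g' m s := by
      rw [← summable_nat_add_iff 1]
      simp_rw [hsucc]
      exact (hasSum_besselEntire (by linarith : 0 ≤ ν + 1) s).summable.neg
    rw [hs.tsum_eq_zero_add, hzero, zero_add]
    simp_rw [hsucc]
    rw [tsum_neg, besselEntire]
  · intro m y hy
    cases m with
    | zero => simp [hzero, u]
    | succ k =>
      rw [hsucc, norm_neg]
      refine (norm_besselEntire_term_le (by linarith) y k).trans ?_
      have hΓ := Real.Gamma_pos_of_pos (show 0 < ν + 1 + 1 by positivity)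
      have hy' : |y| ≤ R := by simpa using (Metric.mem_ball.1 hy).le
      simp only [u]
      gcongr

/-- The three-term recurrence in the order. -/
theorem besselEntire_recurrence {ν : ℝ} (hν : 0 ≤ ν) (s : ℝ) :
    s * besselEntire (ν + 2) s = (ν + 1) * besselEntire (ν + 1) s - besselEntire ν s := by
  have h0 := hasSum_besselEntire hν s
  have h1 := (hasSum_besselEntire (by linarith : 0 ≤ ν + 1) s).mul_left (ν + 1)
  have h2 := (hasSum_besselEntire (by linarith : 0 ≤ ν + 2) s).mul_left s
  have h10 := h1.sub h0
  have hΓ : Real.Gamma (ν + 1 + 1) = (ν + 1) * Real.Gamma (ν + 1) :=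
    Real.Gamma_add_one (by positivity)
  have hp := (Real.Gamma_pos_of_pos (show 0 < ν + 1 by positivity)).ne'
  have hν1 : ν + 1 ≠ 0 := by positivity
  have hzero : (ν + 1) * ((-s) ^ 0 / ((0 : ℕ).factorial * Real.Gamma ((0 : ℕ) + (ν + 1) + 1))) -
      (-s) ^ 0 / ((0 : ℕ).factorial * Real.Gamma ((0 : ℕ) + ν + 1)) = 0 := by
    simp only [Nat.cast_zero, zero_add, hΓ, pow_zero, Nat.factorial_zero, Nat.cast_one, one_mul]
    field_simp
    ring
  have h3 := (hasSum_nat_add_iff' 1).2 h10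
  rw [Finset.sum_range_one, hzero, sub_zero] at h3
  refine h2.unique (h3.congr_fun ?_)
  intro m
  have e1 : ((m + 1 : ℕ) : ℝ) + ν + 1 = m + ν + 2 := by push_cast; ring
  have e2 : ((m + 1 : ℕ) : ℝ) + (ν + 1) + 1 = (m + ν + 2) + 1 := by push_cast; ring
  have e3 : (m : ℝ) + (ν + 2) + 1 = (m + ν + 2) + 1 := by ring
  have hp : 0 < (m : ℝ) + ν + 2 := by positivity
  have hp' := hp.ne'
  have hΓ := (Real.Gamma_pos_of_pos hp).ne'
  have hf : (m.factorial : ℝ) ≠ 0 := by positivity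
  simp only [e1, e2, e3, Real.Gamma_add_one hp', Nat.factorial_succ, pow_succ]
  push_cast
  field_simp
  ring

/-- Energy bound: `h ^ 2 + s * h' ^ 2` is antitone along `s ≥ 0` for `h = besselEntire ν`. -/
theorem abs_besselEntire_le {ν : ℝ} (hν : 0 ≤ ν) {s : ℝ} (hs : 0 ≤ s) :
    |besselEntire ν s| ≤ |besselEntire ν 0| := by
  let E : ℝ → ℝ := fun s => besselEntire ν s ^ 2 + s * besselEntire (ν + 1) s ^ 2
  have hE : ∀ s, HasDerivAt E (-(2 * ν + 1) * besselEntire (ν + 1) s ^ 2) s := by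
    intro s
    have h0 := hasDerivAt_besselEntire hν s
    have h1 := hasDerivAt_besselEntire (by linarith : 0 ≤ ν + 1) s
    have h2 := (h0.pow 2).add ((hasDerivAt_id s).mul (h1.pow 2))
    refine h2.congr_deriv ?_
    have hr := besselEntire_recurrence hν s
    rw [show ν + 1 + 1 = ν + 2 by ring]
    simp only [id, Pi.pow_apply]
    push_cast
    linear_combination (-2 * besselEntire (ν + 1) s) * hr
  have hanti : Antitone E := antitone_of_deriv_nonpos (fun s => (hE s).differentiableAt)
    fun s => by
      rw [(hE s).deriv]
      nlinarith [sq_nonneg (besselEntire (ν + 1) s)]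
  have h := hanti hs
  simp only [E, zero_mul, add_zero] at h
  refine sq_le_sq.1 (le_trans ?_ h)
  have := mul_nonneg hs (sq_nonneg (besselEntire (ν + 1) s))
  linarith

theorem continuous_besselEntire {ν : ℝ} (hν : 0 ≤ ν) : Continuous (besselEntire ν) :=
  continuous_iff_continuousAt.2 fun s => (hasDerivAt_besselEntire hν s).continuousAt

theorem integrableOn_rpow_sub_one_mul_exp {a r : ℝ} (ha : 0 < a) (hr : 0 < r) :
    IntegrableOn (fun x : ℝ => x ^ (a - 1) * Real.exp (-(r * x))) (Set.Ioi 0) := by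
  refine Integrable.of_integral_ne_zero ?_
  rw [Real.integral_rpow_mul_exp_neg_mul_Ioi ha hr]
  have := Real.Gamma_pos_of_pos ha
  positivity

/-- Absolute value of the coefficient of the double series representing the Laplace transform of
`x ^ (s - 1) * besselEntire ν (x ^ 2 / 4)`. -/
noncomputable def laplaceCoeff (s ν : ℝ) (p : ℕ × ℕ) : ℝ :=
  ascFactorial s (p.2 + 2 * p.1) / (p.1.factorial * p.2.factorial * ascFactorial (1 + ν) p.1)

theorem laplaceCoeff_nonneg {s ν : ℝ} (hs : 0 < s) (hν : 0 ≤ ν) (p : ℕ × ℕ) :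
    0 ≤ laplaceCoeff s ν p := by
  have := ascFactorial_pos (show 0 < 1 + ν by positivity) p.1
  have := ascFactorial_pos hs (p.2 + 2 * p.1)
  unfold laplaceCoeff
  positivity

theorem summable_laplaceCoeff {s ν w : ℝ} (hs : 0 < s) (hν : 0 ≤ ν) (hw0 : 0 ≤ w)
    (hw : w < 1 / 64) : Summable fun p => laplaceCoeff s ν p * w ^ (p.1 + p.2) := by
  obtain ⟨B, hB, hBle⟩ := exists_ascFactorial_le s
  refine Summable.of_nonneg_of_le
    (fun p => mul_nonneg (laplaceCoeff_nonneg hs hν p) (by positivity)) ?_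
    ((summable_geometric_mul_geometric (x := 64 * w) (y := 4 * w) (by linarith) (by linarith)
      (by linarith) (by linarith)).mul_left B)
  rintro ⟨m, j⟩
  have hm := ascFactorial_pos (show 0 < 1 + ν by positivity) m
  have h1 : ascFactorial s (j + 2 * m) ≤ B * (2 ^ (j + 2 * m) * (j + 2 * m).factorial) :=
    (le_abs_self _).trans (hBle _)
  have h2 := factorial_add_le j (2 * m)
  have h3 : ((2 * m).factorial : ℝ) ≤ 2 ^ (2 * m) * (m.factorial * m.factorial) := by
    simpa [two_mul] using factorial_add_le m m
  have h4 := factorial_le_ascFactorial (show 1 ≤ 1 + ν by linarith) m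
  have h5 : ascFactorial s (j + 2 * m) ≤ B * (2 ^ (j + 2 * m) * (2 ^ (j + 2 * m) *
      (j.factorial * (2 ^ (2 * m) * (m.factorial * ascFactorial (1 + ν) m))))) := by
    refine h1.trans ?_
    gcongr
    refine h2.trans ?_
    gcongr
    refine h3.trans ?_
    gcongr
  have h6 : laplaceCoeff s ν (m, j) ≤ B * (64 ^ m * 4 ^ j) := by
    rw [laplaceCoeff, div_le_iff₀ (by positivity)]
    refine h5.trans_eq ?_
    have e1 : (64 : ℝ) ^ m = 2 ^ (6 * m) := by rw [pow_mul]; norm_num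
    have e2 : (4 : ℝ) ^ j = 2 ^ (2 * j) := by rw [pow_mul]; norm_num
    rw [e1, e2]
    ring
  refine (mul_le_mul_of_nonneg_right h6 (by positivity)).trans_eq ?_
  ring

theorem tsum_laplaceCoeff {s ν w : ℝ} (hs : 0 < s) (hν : 0 ≤ ν) (hw0 : 0 ≤ w) (hw : w < 1 / 64) :
    ∑' p : ℕ × ℕ, (-1) ^ p.1 * (laplaceCoeff s ν p * w ^ (p.1 + p.2)) =
      hyper2F1 (s - ν) s (1 + ν) (-w) := by
  have hG' : Summable fun p : ℕ × ℕ => (-1) ^ p.1 * (laplaceCoeff s ν p * w ^ (p.1 + p.2)) := by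
    refine Summable.of_norm_bounded (summable_laplaceCoeff hs hν hw0 hw) fun p => ?_
    rw [norm_mul, norm_pow, norm_neg, norm_one, one_pow, one_mul,
      Real.norm_of_nonneg (mul_nonneg (laplaceCoeff_nonneg hs hν p) (by positivity))]
  rw [tsum_prod_eq_tsum_sum_range hG', hyper2F1]
  refine tsum_congr fun n => ?_
  have hcv := sum_choose_mul_ascFactorial_div (s + n) (1 + ν) (by positivity) n
  rw [show 1 + ν - (s + n) = -(s - ν - 1) - n by ring, ascFactorial_neg_sub,
    show s - ν - 1 + 1 = s - ν by ring] at hcv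
  have e : ∀ m ∈ Finset.range (n + 1),
      (-1) ^ m * (laplaceCoeff s ν (m, n - m) * w ^ (m + (n - m))) =
      ascFactorial s n * w ^ n / n.factorial *
      ((-1) ^ m * (n.choose m : ℝ) * (ascFactorial (s + n) m / ascFactorial (1 + ν) m)) := by
    intro m hm
    have hm' : m ≤ n := Nat.lt_succ_iff.1 (Finset.mem_range.1 hm)
    have hn : (n.factorial : ℝ) ≠ 0 := by positivity
    simp only [laplaceCoeff, Nat.add_sub_cancel' hm', Nat.cast_choose ℝ hm',
      show n - m + 2 * m = n + m by omega, ascFactorial_add]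
    field_simp
  rw [Finset.sum_congr rfl e, ← Finset.mul_sum, hcv, neg_pow]
  ring

/-- Expansion of both `exp (Q * x)` and the Bessel factor in the Laplace integrand. -/
theorem tsum_laplace_integrand {ν s P Q x : ℝ} (hν : 0 ≤ ν) (hPQ : P * Q = 1 / 4) (hx : 0 < x) :
    ∑' p : ℕ × ℕ, (-1) ^ p.1 * (P ^ p.1 * Q ^ (p.1 + p.2) /
        (p.1.factorial * p.2.factorial * Real.Gamma ((p.1 : ℝ) + ν + 1)) *
        (x ^ (s + ((p.2 + 2 * p.1 : ℕ) : ℝ) - 1) * Real.exp (-(P * x)))) =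
      Real.exp (-(P - Q) * x) * (x ^ (s - 1) * besselEntire ν (x ^ 2 / 4)) := by
  have hE : HasSum (fun j : ℕ => (Q * x) ^ j / (j.factorial : ℝ)) (Real.exp (Q * x)) := by
    rw [Real.exp_eq_exp_ℝ]
    exact NormedSpace.expSeries_div_hasSum_exp (Q * x)
  have hEs : Summable fun j : ℕ => ‖(Q * x) ^ j / (j.factorial : ℝ)‖ :=
    (Real.summable_pow_div_factorial (Q * x)).norm
  have hprod := tsum_mul_tsum_of_summable_norm
    (summable_norm_besselEntire hν (x ^ 2 / 4)) hEs
  rw [hE.tsum_eq, (hasSum_besselEntire hν (x ^ 2 / 4)).tsum_eq] at hprod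
  have hexp : Real.exp (-(P - Q) * x) = Real.exp (Q * x) * Real.exp (-(P * x)) := by
    rw [← Real.exp_add]
    congr 1
    ring
  have hsplit : Real.exp (-(P - Q) * x) * (x ^ (s - 1) * besselEntire ν (x ^ 2 / 4)) =
      x ^ (s - 1) * Real.exp (-(P * x)) * (besselEntire ν (x ^ 2 / 4) * Real.exp (Q * x)) := by
    rw [hexp]
    ring
  rw [hsplit, hprod, ← tsum_mul_left]
  refine tsum_congr ?_
  rintro ⟨m, j⟩
  have hx4 : -(x ^ 2 / 4) = -1 * (P * Q * x ^ 2) := by rw [hPQ]; ring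
  have hxp : x ^ (s + ((j + 2 * m : ℕ) : ℝ) - 1) = x ^ (s - 1) * x ^ (j + 2 * m) := by
    rw [← Real.rpow_natCast, ← Real.rpow_add hx]
    congr 1
    ring
  dsimp only
  rw [hx4, hxp]
  generalize x ^ (s - 1) = X
  generalize Real.exp (-(P * x)) = E
  generalize Real.Gamma ((m : ℝ) + ν + 1) = G
  simp only [mul_pow, pow_add, pow_mul, div_eq_mul_inv, mul_inv]
  ring

/-- The Laplace transform of `x ^ (s - 1) * besselEntire ν (x ^ 2 / 4)` at `P - Q`, for `Q / P`
small. -/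
theorem integral_exp_mul_besselEntire {ν s P Q : ℝ} (hν : 0 ≤ ν) (hs : 0 < s)
    (hP : 0 < P) (hQ : 0 ≤ Q) (hPQ : P * Q = 1 / 4) (hw : Q / P < 1 / 64) :
    ∫ x in Set.Ioi (0 : ℝ), Real.exp (-(P - Q) * x) * (x ^ (s - 1) * besselEntire ν (x ^ 2 / 4)) =
      P ^ (-s) * (Real.Gamma s / Real.Gamma (ν + 1)) * hyper2F1 (s - ν) s (1 + ν) (-(Q / P)) := by
  have hw0 : 0 ≤ Q / P := by positivity
  have hν1 : 0 < 1 + ν := by positivity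
  have hΓ := Real.Gamma_pos_of_pos hν1
  let A : ℕ × ℕ → ℝ → ℝ := fun p x => P ^ p.1 * Q ^ (p.1 + p.2) /
    (p.1.factorial * p.2.factorial * Real.Gamma ((p.1 : ℝ) + ν + 1)) *
    (x ^ (s + ((p.2 + 2 * p.1 : ℕ) : ℝ) - 1) * Real.exp (-(P * x)))
  let K : ℝ := P ^ (-s) * (Real.Gamma s / Real.Gamma (ν + 1))
  have hexp : ∀ p : ℕ × ℕ, 0 < s + ((p.2 + 2 * p.1 : ℕ) : ℝ) := fun p => by positivity
  have hA : ∀ p, IntegrableOn (A p) (Set.Ioi 0) := fun p =>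
    (integrableOn_rpow_sub_one_mul_exp (hexp p) hP).const_mul _
  have hval : ∀ p, ∫ x in Set.Ioi (0 : ℝ), A p x =
      K * (laplaceCoeff s ν p * (Q / P) ^ (p.1 + p.2)) := by
    rintro ⟨m, j⟩
    have hm := ascFactorial_pos hν1 m
    simp only [A, laplaceCoeff, K]
    rw [integral_const_mul, Real.integral_rpow_mul_exp_neg_mul_Ioi (hexp (m, j)) hP,
      Gamma_add_nat hs, show (m : ℝ) + ν + 1 = (1 + ν) + m by ring, Gamma_add_nat hν1,
      add_comm ν 1, Real.rpow_add (by positivity), Real.rpow_natCast, one_div, Real.inv_rpow hP.le,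
      Real.rpow_neg hP.le]
    have hPs : P ^ s ≠ 0 := by positivity
    rw [div_pow, inv_pow]
    field_simp
    ring
  have hnorm : ∀ p, ∫ x in Set.Ioi (0 : ℝ), ‖(-1) ^ p.1 * A p x‖ =
      K * (laplaceCoeff s ν p * (Q / P) ^ (p.1 + p.2)) := by
    intro p
    rw [← hval]
    refine setIntegral_congr_fun measurableSet_Ioi fun x hx => ?_
    have hx0 : (0 : ℝ) < x := hx
    have hΓm := Real.Gamma_pos_of_pos (show 0 < (p.1 : ℝ) + ν + 1 by positivity)
    have hA0 : 0 ≤ A p x := by positivity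
    rw [norm_mul, norm_pow, norm_neg, norm_one, one_pow, one_mul, Real.norm_of_nonneg hA0]
  have hsum := hasSum_integral_of_summable_integral_norm (μ := volume.restrict (Set.Ioi 0))
    (F := fun p x => (-1) ^ p.1 * A p x) (fun p => (hA p).const_mul _)
    (by simp_rw [hnorm]; exact (summable_laplaceCoeff hs hν hw0 hw).mul_left K)
  rw [setIntegral_congr_fun measurableSet_Ioi
    fun x hx => tsum_laplace_integrand (s := s) hν hPQ hx] at hsum
  rw [← hsum.tsum_eq, ← tsum_laplaceCoeff hs hν hw0 hw, ← tsum_mul_left]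
  refine tsum_congr fun p => ?_
  rw [integral_const_mul, hval]
  ring

theorem analyticOnNhd_laplace_of_nonneg {f : ℝ → ℝ} (hf : Measurable f) (hf0 : ∀ x, 0 ≤ f x)
    (hint : ∀ c : ℝ, 0 < c → IntegrableOn (fun x => Real.exp (-c * x) * f x) (Set.Ioi 0)) :
    AnalyticOnNhd ℝ (fun c : ℝ => ∫ x in Set.Ioi (0 : ℝ), Real.exp (-c * x) * f x)
      (Set.Ioi 0) := by
  let ρ := (volume.restrict (Set.Ioi (0 : ℝ))).withDensity fun x => ENNReal.ofReal (f x)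
  have hlt : ∀ᵐ x ∂volume.restrict (Set.Ioi (0 : ℝ)), ENNReal.ofReal (f x) < ⊤ :=
    .of_forall fun _ => ENNReal.ofReal_lt_top
  have hsmul : ∀ c x : ℝ, (ENNReal.ofReal (f x)).toReal • Real.exp (c * -x) =
      Real.exp (-c * x) * f x := by
    intro c x
    rw [ENNReal.toReal_ofReal (hf0 x), smul_eq_mul, mul_comm, mul_neg, neg_mul]
  have hmgf : ProbabilityTheory.mgf (fun x : ℝ => -x) ρ =
      fun c : ℝ => ∫ x in Set.Ioi (0 : ℝ), Real.exp (-c * x) * f x := by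
    funext c
    rw [ProbabilityTheory.mgf, integral_withDensity_eq_integral_toReal_smul hf.ennreal_ofReal hlt]
    simp_rw [hsmul]
  have hsub : Set.Ioi (0 : ℝ) ⊆ ProbabilityTheory.integrableExpSet (fun x : ℝ => -x) ρ := by
    intro c hc
    rw [ProbabilityTheory.integrableExpSet, Set.mem_ofPred_eq,
      integrable_withDensity_iff_integrable_smul' hf.ennreal_ofReal hlt]
    simp_rw [hsmul]
    exact hint c hc
  rw [← hmgf]
  exact ProbabilityTheory.analyticOnNhd_mgf.mono (interior_maximal hsub isOpen_Ioi)

theorem analyticOnNhd_laplace {f : ℝ → ℝ} (hf : Measurable f)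
    (hint : ∀ c : ℝ, 0 < c → IntegrableOn (fun x => Real.exp (-c * x) * f x) (Set.Ioi 0)) :
    AnalyticOnNhd ℝ (fun c : ℝ => ∫ x in Set.Ioi (0 : ℝ), Real.exp (-c * x) * f x)
      (Set.Ioi 0) := by
  have habs : ∀ c : ℝ, 0 < c →
      IntegrableOn (fun x => Real.exp (-c * x) * |f x|) (Set.Ioi 0) := fun c hc =>
    (hint c hc).abs.congr (.of_forall fun x => by
      simp only [abs_mul, Real.abs_exp])
  have hdiff : ∀ c : ℝ, 0 < c →
      IntegrableOn (fun x => Real.exp (-c * x) * (|f x| - f x)) (Set.Ioi 0) := fun c hc =>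
    ((habs c hc).sub (hint c hc)).congr (.of_forall fun x => by
      simp only [Pi.sub_apply, mul_sub])
  have h1 := analyticOnNhd_laplace_of_nonneg (measurable_norm.comp hf) (fun x => abs_nonneg (f x))
    habs
  have h2 := analyticOnNhd_laplace_of_nonneg ((measurable_norm.comp hf).sub hf)
    (fun x => sub_nonneg.2 (le_abs_self (f x))) hdiff
  refine (h1.sub h2).congr isOpen_Ioi fun c hc => ?_
  simp only [Pi.sub_apply, Function.comp_apply, Real.norm_eq_abs]
  rw [← integral_sub (habs c hc) (hdiff c hc)]
  refine integral_congr_ae (.of_forall fun x => ?_)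
  simp only
  ring

theorem analyticOnNhd_laplace_besselEntire {ν s : ℝ} (hν : 0 ≤ ν) (hs : 0 < s) :
    AnalyticOnNhd ℝ (fun c : ℝ => ∫ x in Set.Ioi (0 : ℝ),
      Real.exp (-c * x) * (x ^ (s - 1) * besselEntire ν (x ^ 2 / 4))) (Set.Ioi 0) := by
  have hB : Measurable fun x : ℝ => besselEntire ν (x ^ 2 / 4) :=
    ((continuous_besselEntire hν).comp (by fun_prop : Continuous fun x : ℝ => x ^ 2 / 4)).measurable
  refine analyticOnNhd_laplace ((measurable_id.pow_const _).mul hB) fun c hc => ?_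
  refine (((integrableOn_rpow_sub_one_mul_exp hs hc).mul_bdd (c := |besselEntire ν 0|)
    hB.aestronglyMeasurable (.of_forall fun x =>
      abs_besselEntire_le hν (by positivity)))).congr (.of_forall fun x => ?_)
  simp only [neg_mul]
  ring

theorem analyticOnNhd_hyper2F1 {a b γ : ℝ} (hb : 0 < b) (hγ : 0 < γ) :
    AnalyticOnNhd ℝ (hyper2F1 a b γ) (Metric.ball 0 1) := by
  have heq : hyper2F1 a b γ = (ordinaryHypergeometricSeries ℝ a b γ).sum := by
    funext z
    rw [ordinaryHypergeometric_sum_eq, hyper2F1]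
    refine tsum_congr fun n => ?_
    simp only [ascPochhammer_eval_eq_ascFactorial, smul_eq_mul, div_eq_mul_inv, mul_inv]
    ring
  have hrad : 1 ≤ (ordinaryHypergeometricSeries ℝ a b γ).radius := by
    by_cases ha : ∃ k : ℕ, a = -(k : ℝ)
    · obtain ⟨k, rfl⟩ := ha
      rw [ordinaryHypergeometric_radius_top_of_neg_nat₁]
      exact le_top
    · push Not at ha
      refine (ordinaryHypergeometricSeries_radius_eq_one ℝ a b γ fun k =>
        ⟨fun h => ha k ?_, ?_, ?_⟩).ge
      · linarith
      · have : (0 : ℝ) ≤ k := k.cast_nonneg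
        linarith
      · have : (0 : ℝ) ≤ k := k.cast_nonneg
        linarith
  rw [heq]
  refine ((ordinaryHypergeometricSeries ℝ a b γ).hasFPowerSeriesOnBall
    (one_pos.trans_le hrad)).analyticOnNhd.mono ?_
  rw [← Metric.eball_ofReal, ENNReal.ofReal_one]
  exact Metric.eball_subset_eball hrad

theorem abs_lt_sqrt_sq_add_one (c : ℝ) : |c| < Real.sqrt (c ^ 2 + 1) := by
  rw [← Real.sqrt_sq_eq_abs]
  exact Real.sqrt_lt_sqrt (sq_nonneg c) (lt_add_one _)

theorem hypergeometric_argument_mem_Ioo {c : ℝ} (hc : 0 < c) :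
    (Real.sqrt (c ^ 2 + 1) - c) / (2 * Real.sqrt (c ^ 2 + 1)) ∈ Set.Ioo (0 : ℝ) (1 / 2) := by
  have h := (abs_lt.1 (abs_lt_sqrt_sq_add_one c)).2
  have hr : 0 < Real.sqrt (c ^ 2 + 1) := hc.trans h
  refine ⟨div_pos (by linarith) (by linarith), ?_⟩
  rw [div_lt_div_iff₀ (by positivity) two_pos]
  linarith

/-- The closed form for the Laplace transform of `x ^ μ * besselJ ν x` at `c`. -/
noncomputable def besselMoment (μ ν c : ℝ) : ℝ :=
  Real.Gamma (μ + ν + 1) / ((c ^ 2 + 1) ^ ((μ + 1) / 2) * Real.Gamma (ν + 1)) *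
    ((Real.sqrt (c ^ 2 + 1) + c) / (Real.sqrt (c ^ 2 + 1) - c)) ^ (-ν / 2) *
    hyper2F1 (-μ) (μ + 1) (1 + ν) ((Real.sqrt (c ^ 2 + 1) - c) / (2 * Real.sqrt (c ^ 2 + 1)))

theorem AnalyticAt.real_rpow_const {f : ℝ → ℝ} {x : ℝ} (p : ℝ) (hf : AnalyticAt ℝ f x)
    (hx : f x ≠ 0) : AnalyticAt ℝ (fun y => f y ^ p) x :=
  (Real.contDiffAt_rpow_const_of_ne (n := ⊤) (p := p) hx).analyticAt.comp hf

theorem analyticOnNhd_besselMoment {μ ν : ℝ} (hμ : -1 < μ) (hν : 0 ≤ ν) :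
    AnalyticOnNhd ℝ (besselMoment μ ν) (Set.Ioi 0) := by
  intro c hc
  obtain ⟨hlo, hhi⟩ := abs_lt.1 (abs_lt_sqrt_sq_add_one c)
  have hr : 0 < Real.sqrt (c ^ 2 + 1) := Real.sqrt_pos.2 (by positivity)
  have hΓ := Real.Gamma_pos_of_pos (show 0 < ν + 1 by positivity)
  have hbase : AnalyticAt ℝ (fun c : ℝ => c ^ 2 + 1) c := by fun_prop
  have hbase0 : c ^ 2 + 1 ≠ 0 := by positivity
  have hsqrt : AnalyticAt ℝ (fun c : ℝ => Real.sqrt (c ^ 2 + 1)) c := by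
    simp_rw [Real.sqrt_eq_rpow]
    exact hbase.real_rpow_const (1 / 2) hbase0
  have hpow : AnalyticAt ℝ (fun c : ℝ => (c ^ 2 + 1) ^ ((μ + 1) / 2)) c :=
    hbase.real_rpow_const _ hbase0
  have hquot : AnalyticAt ℝ
      (fun c : ℝ => (Real.sqrt (c ^ 2 + 1) + c) / (Real.sqrt (c ^ 2 + 1) - c)) c :=
    (hsqrt.add analyticAt_id).div (hsqrt.sub analyticAt_id) (sub_pos.2 hhi).ne'
  have hquot0 : (Real.sqrt (c ^ 2 + 1) + c) / (Real.sqrt (c ^ 2 + 1) - c) ≠ 0 :=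
    (div_pos (by linarith) (by linarith)).ne'
  have harg : AnalyticAt ℝ
      (fun c : ℝ => (Real.sqrt (c ^ 2 + 1) - c) / (2 * Real.sqrt (c ^ 2 + 1))) c :=
    (hsqrt.sub analyticAt_id).div (analyticAt_const.mul hsqrt) (by positivity)
  obtain ⟨hz0, hz1⟩ := hypergeometric_argument_mem_Ioo hc
  have hhyper := analyticOnNhd_hyper2F1 (a := -μ) (b := μ + 1) (γ := 1 + ν) (by linarith)
    (by linarith) ((Real.sqrt (c ^ 2 + 1) - c) / (2 * Real.sqrt (c ^ 2 + 1)))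
    (by rw [mem_ball_zero_iff, Real.norm_of_nonneg hz0.le]; linarith)
  have hden : (c ^ 2 + 1) ^ ((μ + 1) / 2) * Real.Gamma (ν + 1) ≠ 0 := by positivity
  exact ((analyticAt_const.div (hpow.mul analyticAt_const) hden).mul
    (hquot.real_rpow_const _ hquot0)).mul
    (hhyper.comp (f := fun c : ℝ => (Real.sqrt (c ^ 2 + 1) - c) / (2 * Real.sqrt (c ^ 2 + 1))) harg)

theorem integral_exp_mul_besselEntire_of_large {μ ν c : ℝ} (hμ : -1 < μ) (hν : 0 ≤ ν)
    (hc : 5 < c) :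
    ∫ x in Set.Ioi (0 : ℝ),
        Real.exp (-c * x) * (x ^ (μ + ν + 1 - 1) * besselEntire ν (x ^ 2 / 4)) =
      2 ^ ν * besselMoment μ ν c := by
  have hhi := (abs_lt.1 (abs_lt_sqrt_sq_add_one c)).2
  have hsq : Real.sqrt (c ^ 2 + 1) ^ 2 = c ^ 2 + 1 := Real.sq_sqrt (by positivity)
  have hμ1 : (c ^ 2 + 1) ^ ((μ + 1) / 2) = Real.sqrt (c ^ 2 + 1) ^ (μ + 1) := by
    rw [Real.sqrt_eq_rpow, ← Real.rpow_mul (by positivity)]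
    congr 1
    ring
  rw [besselMoment, hμ1]
  generalize Real.sqrt (c ^ 2 + 1) = r at *
  obtain ⟨P, hP⟩ : ∃ P, P = (r + c) / 2 := ⟨_, rfl⟩
  obtain ⟨Q, hQ⟩ : ∃ Q, Q = (r - c) / 2 := ⟨_, rfl⟩
  have hP5 : 5 < P := by linarith
  have hP0 : 0 < P := by linarith
  have hQ0 : 0 < Q := by linarith
  have hr : r = P + Q := by linarith
  have hcPQ : c = P - Q := by linarith
  have hPQ : P * Q = 1 / 4 := by rw [hP, hQ]; linarith
  have hw : Q / P < 1 / 64 := by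
    rw [div_lt_div_iff₀ hP0 (by norm_num)]
    nlinarith
  have hz : Q / r < 1 / 8 := by
    rw [div_lt_div_iff₀ (by linarith) (by norm_num)]
    nlinarith
  have hr0 : 0 < r := by linarith
  have hone : 1 - Q / r = P / r := by rw [hr]; field_simp; ring
  have hpf := hyper2F1_pfaff (-μ) (μ + 1) (c := 1 + ν) (z := Q / r) (by linarith) (by positivity) hz
  rw [hone, div_div_div_cancel_right₀ hr0.ne', show 1 + ν - -μ = μ + ν + 1 by ring] at hpf
  have hmain := integral_exp_mul_besselEntire (s := μ + ν + 1) hν (by linarith) hP0 hQ0.le hPQ hw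
  rw [← hcPQ, show μ + ν + 1 - ν = μ + 1 by ring] at hmain
  have hratio : ((r + c) / (r - c)) ^ (-ν / 2) = (2 * P) ^ (-ν) := by
    have : (r + c) / (r - c) = (2 * P) ^ 2 := by
      rw [show r + c = 2 * P by linarith, show r - c = 2 * Q by linarith,
        div_eq_iff (by positivity)]
      linear_combination (-8 * P) * hPQ
    rw [this, ← Real.rpow_natCast, ← Real.rpow_mul (by positivity)]
    congr 1
    push_cast
    ring
  have hzarg : (r - c) / (2 * r) = Q / r := by rw [hQ]; field_simp
  have hPs : P ^ (-(μ + ν + 1)) = P ^ (-ν) * P ^ (-(μ + 1)) := by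
    rw [← Real.rpow_add hP0]
    congr 1
    ring
  have h2 : (2 : ℝ) ^ ν ≠ 0 := by positivity
  have hPμ : P ^ (μ + 1) ≠ 0 := by positivity
  have hrμ : r ^ (μ + 1) ≠ 0 := by positivity
  have hΓ := (Real.Gamma_pos_of_pos (show 0 < ν + 1 by positivity)).ne'
  rw [hmain, hratio, hzarg, ← hpf, Real.mul_rpow zero_le_two hP0.le, hPs,
    Real.div_rpow hP0.le hr0.le, Real.rpow_neg zero_le_two, Real.rpow_neg hP0.le (μ + 1),
    Real.rpow_neg hr0.le (μ + 1)]
  field_simp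

theorem integral_exp_mul_besselEntire_eq {μ ν c : ℝ} (hμ : -1 < μ) (hν : 0 ≤ ν) (hc : 0 < c) :
    ∫ x in Set.Ioi (0 : ℝ),
        Real.exp (-c * x) * (x ^ (μ + ν + 1 - 1) * besselEntire ν (x ^ 2 / 4)) =
      2 ^ ν * besselMoment μ ν c := by
  refine (analyticOnNhd_laplace_besselEntire hν (by linarith)).eqOn_of_preconnected_of_eventuallyEq
    (analyticOnNhd_const.mul (analyticOnNhd_besselMoment hμ hν)) isPreconnected_Ioi
    (show (6 : ℝ) ∈ Set.Ioi 0 by norm_num) ?_ hc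
  filter_upwards [Ioi_mem_nhds (show (5 : ℝ) < 6 by norm_num)] with c hc
  exact integral_exp_mul_besselEntire_of_large hμ hν hc

theorem integral_rpow_mul_exp_mul_besselJ {μ ν c : ℝ} (hμ : -1 < μ) (hν : 0 ≤ ν) (hc : 0 < c) :
    ∫ x in Set.Ioi (0 : ℝ), x ^ μ * Real.exp (-c * x) * besselJ ν x = besselMoment μ ν c := by
  have h2 : (2 : ℝ) ^ ν ≠ 0 := by positivity
  rw [← mul_right_inj' h2, ← integral_exp_mul_besselEntire_eq hμ hν hc, ← integral_const_mul]
  refine setIntegral_congr_fun measurableSet_Ioi fun x hx => ?_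
  have hx0 : (0 : ℝ) < x := hx
  rw [besselJ_eq_rpow_mul_besselEntire ν hx0, Real.div_rpow hx0.le zero_le_two,
    add_sub_cancel_right, Real.rpow_add hx0]
  field_simp

theorem coreMoment_closed_form (ν α c : ℝ) (hν : 0 ≤ ν) (hα : -1 < α) (hc : 0 < c) (k : ℕ) :
    (Real.sqrt (c ^ 2 + 1) - c) / (2 * Real.sqrt (c ^ 2 + 1)) ∈ Set.Ioo (0 : ℝ) (1 / 2) ∧
    ∫ x in Set.Ioi (0 : ℝ), x ^ ((k : ℝ) + α) * Real.exp (-c * x) * besselJ ν x =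
      Real.Gamma ((k : ℝ) + α + ν + 1) /
          ((c ^ 2 + 1) ^ (((k : ℝ) + α + 1) / 2) * Real.Gamma (ν + 1)) *
        ((Real.sqrt (c ^ 2 + 1) + c) / (Real.sqrt (c ^ 2 + 1) - c)) ^ (-ν / 2) *
        hyper2F1 (-(k : ℝ) - α) ((k : ℝ) + α + 1) (1 + ν)
          ((Real.sqrt (c ^ 2 + 1) - c) / (2 * Real.sqrt (c ^ 2 + 1))) := by
  refine ⟨hypergeometric_argument_mem_Ioo hc, ?_⟩
  have hμ : -1 < (k : ℝ) + α := by
    have : (0 : ℝ) ≤ k := k.cast_nonneg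
    linarith
  rw [integral_rpow_mul_exp_mul_besselJ hμ hν hc, besselMoment, neg_add']
end

section
/- Let α > -1 and let i, j be integers with 1 ≤ i ≤ j. Then Σ_{l=1}^{i} [ Γ(j) Γ(α+j) Γ(i) Γ(α+i) ] / [ (j−l)! (i−l)! Γ(l) Γ(α+l) ] = Γ(i+j+α−1). -/
open Polynomial in
/-- `Γ(x + k)` is a falling factorial times `Γ(x)`. -/
lemma Real.Gamma_add_natCast_eq_descPochhammer_mul {x : ℝ} (hx : 0 < x) (k : ℕ) :
    Real.Gamma (x + k) = (descPochhammer ℤ k).smeval (x + k - 1) * Real.Gamma x := by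
  induction k with
  | zero => simp [descPochhammer_zero, smeval_one]
  | succ k ih =>
    have hne : x + k ≠ 0 := by positivity
    rw [Nat.cast_succ, ← add_assoc, Real.Gamma_add_one hne, ih, descPochhammer_succ_left,
      smeval_mul, smeval_X, smeval_comp]
    simp [smeval_sub, smeval_X, smeval_one, mul_assoc]

open Polynomial in
/-- A Chu–Vandermonde convolution for the Gamma function. -/
lemma Real.sum_choose_mul_descFactorial_mul_Gamma_div {x : ℝ} (hx : 0 < x) (m n : ℕ) :
    ∑ k ∈ Finset.range (m + 1), (m.choose k : ℝ) * n.descFactorial k *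
        (Real.Gamma (x + m) / Real.Gamma (x + k)) * Real.Gamma (x + n) =
      Real.Gamma (x + n + m) := by
  have hxn : 0 < x + n := by positivity
  rw [Real.Gamma_add_natCast_eq_descPochhammer_mul hxn,
    show x + n + m - 1 = (n : ℝ) + (x + m - 1) by ring,
    Ring.descPochhammer_smeval_add m (Commute.all _ _),
    Finset.Nat.sum_antidiagonal_eq_sum_range_succ_mk, Finset.sum_mul]
  refine Finset.sum_congr rfl fun k hk => ?_
  obtain ⟨d, rfl⟩ := Nat.exists_eq_add_of_le (Nat.lt_succ_iff.mp (Finset.mem_range.mp hk))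
  have hxk : 0 < x + k := by positivity
  have hG := (Real.Gamma_pos_of_pos hxk).ne'
  have h := Real.Gamma_add_natCast_eq_descPochhammer_mul hxk d
  rw [Nat.cast_add, ← add_assoc, h, mul_div_cancel_right₀ _ hG,
    descPochhammer_smeval_eq_descFactorial]
  simp [mul_assoc]

theorem gamma_convolution_identity (α : ℝ) (hα : -1 < α) (i j : ℕ)
    (hi : 1 ≤ i) (hij : i ≤ j) :
    ∑ l ∈ Finset.Icc 1 i,
        Real.Gamma (j : ℝ) * Real.Gamma (α + (j : ℝ)) * Real.Gamma (i : ℝ) *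
            Real.Gamma (α + (i : ℝ)) /
          (((j - l).factorial : ℝ) * ((i - l).factorial : ℝ) * Real.Gamma (l : ℝ) *
            Real.Gamma (α + (l : ℝ))) =
      Real.Gamma ((i : ℝ) + (j : ℝ) + α - 1) := by
  obtain ⟨m, rfl⟩ := Nat.exists_eq_add_of_le' hi
  obtain ⟨n, rfl⟩ := Nat.exists_eq_add_of_le' (hi.trans hij)
  have hmn : m ≤ n := by omega
  have hx : 0 < α + 1 := by linarith
  rw [show ((m + 1 : ℕ) : ℝ) + ((n + 1 : ℕ) : ℝ) + α - 1 = α + 1 + n + m by push_cast; ring,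
    ← Real.sum_choose_mul_descFactorial_mul_Gamma_div hx, ← Finset.Ico_add_one_right_eq_Icc,
    Finset.sum_Ico_eq_sum_range, Nat.add_sub_cancel]
  refine Finset.sum_congr rfl fun k hk => ?_
  have hkm : k ≤ m := Nat.lt_succ_iff.mp (Finset.mem_range.mp hk)
  have hG := (Real.Gamma_pos_of_pos (show 0 < α + 1 + k by positivity)).ne'
  have hchoose : (m.choose k : ℝ) * k.factorial * (m - k).factorial = m.factorial := by
    exact_mod_cast Nat.choose_mul_factorial_mul_factorial hkm
  have hdesc : ((n - k).factorial : ℝ) * n.descFactorial k = n.factorial := by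
    exact_mod_cast Nat.factorial_mul_descFactorial (hkm.trans hmn)
  rw [add_comm 1 k, Nat.add_sub_add_right, Nat.add_sub_add_right]
  simp only [Nat.cast_succ, Real.Gamma_nat_eq_factorial, ← add_assoc, add_right_comm α _ 1]
  rw [← hchoose, ← hdesc]
  field_simp
end
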